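/- arXiv:1706.03707 — 2 statements merged into one kernel-verified Lean document; each statement's English description precedes it below -/
import Mathlib

section
/- Let X ⊆ ℝⁿ be a compact convex body (a compact convex set with nonempty interior) and let F : X → ℝⁿ be continuous and strictly pseudomonotone on X. Then the variational inequality VI(F, X) has exactly one solution. -/
open scoped RealInnerProductSpace

/-!
By Minty's lemma it is enough to find `x ∈ X` with `0 ≤ F y (y - x)` for all `y ∈ X`, that is, a
common point of `X` and the half-spaces `{x | F y x ≤ F y y}`. Pseudomonotonicity makes these
half-spaces a KKM family: the convex hull of any finitely many points is covered by the half-spaces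
they index. For closed *convex* sets the KKM theorem needs no fixed-point theorem. It follows by
induction from Klee's theorem on convex covers, whose proof separates one member of the cover from
the intersection of the others and restricts the problem to a separating hyperplane. Compactness
passes from finite subfamilies to the whole family, and strictness rules out a second solution.
-/

section Intersection

variable {E ι : Type*} [AddCommGroup E] [Module ℝ E]

/-- A KKM (Knaster–Kuratowski–Mazurkiewicz) family: sets `C i` indexed by points `p i` such that the
convex hull of any finitely many of the points is covered by the corresponding sets. -/
def IsKKM (p : ι → E) (C : ι → Set E) : Prop :=
  ∀ T : Finset ι, convexHull ℝ (p '' T) ⊆ ⋃ i ∈ T, C i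

variable [TopologicalSpace E] [IsTopologicalAddGroup E] [ContinuousSMul ℝ E]
  [LocallyConvexSpace ℝ E] {C : ι → Set E}

theorem inter_biInter_nonempty_of_forall_erase [DecidableEq ι]
    (hclosed : ∀ i, IsClosed (C i)) (hconvex : ∀ i, Convex ℝ (C i)) {S : Finset ι}
    (hS : S.Nonempty) {K : Set E} (hK : IsCompact K) (hKconvex : Convex ℝ K)
    (hcover : K ⊆ ⋃ i ∈ S, C i) (herase : ∀ j ∈ S, (K ∩ ⋂ i ∈ S.erase j, C i).Nonempty) :
    (K ∩ ⋂ i ∈ S, C i).Nonempty := by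
  induction hS using Finset.Nonempty.cons_induction generalizing K with
  | singleton a =>
    obtain ⟨x, hxK, -⟩ := herase a (Finset.mem_singleton_self a)
    exact ⟨x, hxK, by simpa using hcover hxK⟩
  | cons a T ha _ ih =>
    by_contra hempty
    have hdisjoint : Disjoint (K ∩ ⋂ i ∈ T, C i) (C a) := by
      refine Set.disjoint_left.2 fun x hx hxa => hempty ⟨x, hx.1, ?_⟩
      simpa using ⟨hxa, by simpa using hx.2⟩
    obtain ⟨f, u, v, hfu, huv, hfv⟩ := geometric_hahn_banach_compact_closed
      (hKconvex.inter (convex_iInter₂ fun i _ => hconvex i))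
      (hK.inter_right (isClosed_biInter fun i _ => hclosed i))
      (hconvex a) (hclosed a) hdisjoint
    obtain ⟨p, hp⟩ : (K ∩ ⋂ i ∈ T, C i).Nonempty := by
      simpa only [Finset.erase_cons] using herase a (Finset.mem_cons_self a T)
    have hcover_slice : K ∩ {x | f x = u} ⊆ ⋃ i ∈ T, C i := by
      rintro x ⟨hxK, hxu : f x = u⟩
      have hxa : x ∉ C a := fun hxa => (huv.trans (hfv x hxa)).ne' hxu
      simpa [hxa] using hcover hxK
    have herase_slice : ∀ j ∈ T, (K ∩ {x | f x = u} ∩ ⋂ i ∈ T.erase j, C i).Nonempty := by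
      intro j hj
      have haj : a ≠ j := fun h => ha (h ▸ hj)
      obtain ⟨q, hqK, hq⟩ := herase j (Finset.mem_cons_of_mem hj)
      rw [Finset.erase_cons_of_ne ha haj] at hq
      obtain ⟨hqa, hqT⟩ : q ∈ C a ∧ q ∈ ⋂ i ∈ T.erase j, C i := by simpa using hq
      have hpT : p ∈ ⋂ i ∈ T.erase j, C i :=
        Set.biInter_subset_biInter_left (Finset.erase_subset j T) hp.2
      have hinter : Convex ℝ (K ∩ ⋂ i ∈ T.erase j, C i) :=
        hKconvex.inter (convex_iInter₂ fun i _ => hconvex i)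
      obtain ⟨x, hx, hxu⟩ := hinter.isPreconnected.intermediate_value ⟨hp.1, hpT⟩ ⟨hqK, hqT⟩
        f.continuous.continuousOn ⟨(hfu p hp).le, (huv.trans (hfv q hqa)).le⟩
      exact ⟨x, ⟨hx.1, hxu⟩, hx.2⟩
    obtain ⟨x, ⟨hxK, hxu⟩, hxT⟩ := ih (hK.inter_right (isClosed_eq f.continuous continuous_const))
      (hKconvex.inter (convex_hyperplane f.toLinearMap.isLinear u)) hcover_slice herase_slice
    exact (hfu x ⟨hxK, hxT⟩).ne hxu

theorem IsKKM.convexHull_inter_biInter_nonempty {p : ι → E} (hC : IsKKM p C)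
    (hclosed : ∀ i, IsClosed (C i)) (hconvex : ∀ i, Convex ℝ (C i)) {S : Finset ι}
    (hS : S.Nonempty) : (convexHull ℝ (p '' S) ∩ ⋂ i ∈ S, C i).Nonempty := by
  classical
  induction S using Finset.strongInduction with
  | H S ih =>
    refine inter_biInter_nonempty_of_forall_erase hclosed hconvex hS
      ((S.finite_toSet.image p).isCompact_convexHull ℝ) (convex_convexHull ℝ _) (hC S)
      fun j hj => ?_
    rcases (S.erase j).eq_empty_or_nonempty with herase | herase
    · simpa [herase] using hS
    · have hsubset : p '' (S.erase j) ⊆ p '' S := Set.image_mono (Finset.erase_subset j S)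
      exact (ih _ (Finset.erase_ssubset hj) herase).mono
        (Set.inter_subset_inter_left _ (convexHull_mono hsubset))

theorem IsKKM.inter_iInter_nonempty {p : ι → E} (hC : IsKKM p C)
    (hclosed : ∀ i, IsClosed (C i)) (hconvex : ∀ i, Convex ℝ (C i)) {X : Set E}
    (hX : IsCompact X) (hXconvex : Convex ℝ X) (hXne : X.Nonempty) (hp : ∀ i, p i ∈ X) :
    (X ∩ ⋂ i, C i).Nonempty := by
  refine hX.inter_iInter_nonempty C hclosed fun S => ?_
  rcases S.eq_empty_or_nonempty with rfl | hS
  · simpa using hXne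
  · have hhull : convexHull ℝ (p '' S) ⊆ X :=
      convexHull_min (Set.image_subset_iff.2 fun i _ => hp i) hXconvex
    exact (hC.convexHull_inter_biInter_nonempty hclosed hconvex hS).mono
      (Set.inter_subset_inter_left _ hhull)

end Intersection

section VariationalInequality

variable {E : Type*} [AddCommGroup E] [Module ℝ E] [TopologicalSpace E]

/-- `x` solves the (Stampacchia) variational inequality VI(F, X). The operator takes values in the
dual space; on an inner product space, a vector field is viewed as an operator via `innerSL`. -/
def SolvesVI (F : E → StrongDual ℝ E) (X : Set E) (x : E) : Prop :=
  x ∈ X ∧ ∀ y ∈ X, 0 ≤ F x (y - x)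

/-- `x` solves the Minty variational inequality, in which the operator is evaluated at the test
point `y` instead of at `x`; its solution set is an intersection of half-spaces with `X`. -/
def SolvesMintyVI (F : E → StrongDual ℝ E) (X : Set E) (x : E) : Prop :=
  x ∈ X ∧ ∀ y ∈ X, 0 ≤ F y (y - x)

/-- Pseudomonotonicity on `X` in the sense of Karamardian. -/
def IsPseudomonotoneOn (F : E → StrongDual ℝ E) (X : Set E) : Prop :=
  ∀ x ∈ X, ∀ y ∈ X, 0 ≤ F x (y - x) → 0 ≤ F y (y - x)

/-- Strict pseudomonotonicity on `X`, the condition that makes solutions of VI(F, X) unique. -/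
def IsStrictlyPseudomonotoneOn (F : E → StrongDual ℝ E) (X : Set E) : Prop :=
  ∀ x ∈ X, ∀ y ∈ X, x ≠ y → 0 ≤ F x (y - x) → 0 < F y (y - x)

/-- Hemicontinuity on `X`: continuity along segments of `X`, tested only in the direction of the
segment. For convex `X` it is enough to ask for it at the initial point, by
reversing and subdividing segments. -/
def IsHemicontinuousOn (F : E → StrongDual ℝ E) (X : Set E) : Prop :=
  ∀ x ∈ X, ∀ y ∈ X,
    ContinuousWithinAt (fun t : ℝ => F (x + t • (y - x)) (y - x)) (Set.Icc 0 1) 0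

/-- The half-space `{x | 0 ≤ F y (y - x)}` of points satisfying the Minty inequality at `y`. -/
def mintyHalfSpace (F : E → StrongDual ℝ E) (y : E) : Set E :=
  {x | F y x ≤ F y y}

variable {F : E → StrongDual ℝ E} {X : Set E} {x y : E}

theorem mem_mintyHalfSpace : x ∈ mintyHalfSpace F y ↔ 0 ≤ F y (y - x) := by
  rw [map_sub, sub_nonneg]
  rfl

theorem isClosed_mintyHalfSpace : IsClosed (mintyHalfSpace F y) :=
  isClosed_le (F y).continuous continuous_const

theorem convex_mintyHalfSpace : Convex ℝ (mintyHalfSpace F y) :=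
  convex_halfSpace_le (F y).toLinearMap.isLinear _

theorem IsStrictlyPseudomonotoneOn.isPseudomonotoneOn (hF : IsStrictlyPseudomonotoneOn F X) :
    IsPseudomonotoneOn F X := by
  intro x hx y hy hxy
  rcases eq_or_ne x y with rfl | hne
  · exact hxy
  · exact (hF x hx y hy hne hxy).le

theorem IsStrictlyPseudomonotoneOn.solvesVI_unique (hF : IsStrictlyPseudomonotoneOn F X)
    (hx : SolvesVI F X x) (hy : SolvesVI F X y) : x = y := by
  by_contra hne
  have hpos : 0 < F y (y - x) := hF x hx.1 y hy.1 hne (hx.2 y hy.1)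
  have hnonneg : 0 ≤ F y (x - y) := hy.2 x hx.1
  rw [map_sub] at hpos hnonneg
  linarith

theorem IsPseudomonotoneOn.isKKM_mintyHalfSpace (hF : IsPseudomonotoneOn F X)
    (hX : Convex ℝ X) : IsKKM (Subtype.val : X → E) fun y => mintyHalfSpace F y := by
  intro T x hx
  by_contra hcover
  have hxX : x ∈ X := convexHull_min (Set.image_subset_iff.2 fun y _ => y.2) hX hx
  have hhalf : Subtype.val '' (T : Set X) ⊆ {z | F x z < F x x} := by
    rintro _ ⟨y, hyT, rfl⟩
    have hxy : ¬ 0 ≤ F y (y - x) := fun h =>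
      hcover (Set.mem_biUnion hyT (mem_mintyHalfSpace.2 h))
    have hlt : F x (y - x) < 0 := not_le.1 (mt (hF x hxX y y.2) hxy)
    simpa using hlt
  have hlt : F x x < F x x :=
    convexHull_min hhalf (convex_halfSpace_lt (F x).toLinearMap.isLinear _) hx
  exact hlt.false

theorem IsPseudomonotoneOn.exists_solvesMintyVI [IsTopologicalAddGroup E] [ContinuousSMul ℝ E]
    [LocallyConvexSpace ℝ E] (hF : IsPseudomonotoneOn F X) (hX : IsCompact X)
    (hXconvex : Convex ℝ X) (hXne : X.Nonempty) : ∃ x, SolvesMintyVI F X x := by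
  obtain ⟨x, hxX, hx⟩ := (hF.isKKM_mintyHalfSpace hXconvex).inter_iInter_nonempty
    (fun _ => isClosed_mintyHalfSpace) (fun _ => convex_mintyHalfSpace) hX hXconvex hXne
    Subtype.prop
  exact ⟨x, hxX, fun y hy => mem_mintyHalfSpace.1 (Set.mem_iInter.1 hx ⟨y, hy⟩)⟩

theorem isHemicontinuousOn_of_continuousOn_apply [ContinuousAdd E] [ContinuousSMul ℝ E]
    (hX : Convex ℝ X) (hF : ∀ v, ContinuousOn (fun x => F x v) X) : IsHemicontinuousOn F X := by
  intro x hx y hy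
  have hsegment : Continuous fun t : ℝ => x + t • (y - x) := by fun_prop
  exact (hF (y - x)).comp hsegment.continuousOn (fun t ht => hX.add_smul_sub_mem hx hy ht) 0
    (Set.left_mem_Icc.2 zero_le_one)

theorem SolvesMintyVI.solvesVI (hx : SolvesMintyVI F X x) (hX : Convex ℝ X)
    (hF : IsHemicontinuousOn F X) : SolvesVI F X x := by
  refine ⟨hx.1, fun y hy => ?_⟩
  have hlim : Filter.Tendsto (fun t : ℝ => F (x + t • (y - x)) (y - x)) (nhdsWithin 0 (Set.Ioc 0 1))
      (nhds (F x (y - x))) := by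
    simpa [ContinuousWithinAt] using (hF x hx.1 y hy).mono Set.Ioc_subset_Icc_self
  have : (nhdsWithin (0 : ℝ) (Set.Ioc 0 1)).NeBot := by
    rw [nhdsWithin_Ioc_eq_nhdsGT one_pos]
    infer_instance
  refine ge_of_tendsto hlim ?_
  filter_upwards [self_mem_nhdsWithin] with t ht
  have hminty : 0 ≤ t * F (x + t • (y - x)) (y - x) := by
    simpa using hx.2 _ (hX.add_smul_sub_mem hx.1 hy ⟨ht.1.le, ht.2⟩)
  exact nonneg_of_mul_nonneg_right hminty ht.1

theorem vi_has_unique_solution_general [IsTopologicalAddGroup E] [ContinuousSMul ℝ E]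
    [LocallyConvexSpace ℝ E] (hcomp : IsCompact X) (hconv : Convex ℝ X) (hne : X.Nonempty)
    (hF : IsHemicontinuousOn F X) (hstrict : IsStrictlyPseudomonotoneOn F X) :
    ∃! x, SolvesVI F X x := by
  obtain ⟨x, hx⟩ := hstrict.isPseudomonotoneOn.exists_solvesMintyVI hcomp hconv hne
  have hsol : SolvesVI F X x := hx.solvesVI hconv hF
  exact ⟨x, hsol, fun y hy => hstrict.solvesVI_unique hy hsol⟩

end VariationalInequality

/-- Uniqueness of the solution of VI(F, X) for `F` continuous and strictly pseudomonotone
on a compact convex body `X`. -/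
theorem vi_has_unique_solution {n : ℕ}
    (X : Set (EuclideanSpace ℝ (Fin n)))
    (hcomp : IsCompact X) (hconv : Convex ℝ X) (hint : (interior X).Nonempty)
    (F : EuclideanSpace ℝ (Fin n) → EuclideanSpace ℝ (Fin n))
    (hF : ContinuousOn F X)
    (hstrict : ∀ x ∈ X, ∀ y ∈ X, x ≠ y → ⟪F x, y - x⟫ ≥ 0 → ⟪F y, y - x⟫ > 0) :
    ∃! xstar, xstar ∈ X ∧ ∀ x ∈ X, ⟪F xstar, x - xstar⟫ ≥ 0 :=
  vi_has_unique_solution_general (F := fun x => innerSL ℝ (F x)) hcomp hconv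
    (hint.mono interior_subset)
    (isHemicontinuousOn_of_continuousOn_apply hconv fun _ => hF.inner continuousOn_const) hstrict
end

section
/- Let X ⊆ ℝⁿ be a nonempty closed convex set (possibly unbounded), let F : X → ℝⁿ be continuous and strongly monotone on X with constant M > 0, and let x* ∈ X be the solution of the variational inequality VI(F, X). Let {C_j} be a sequence of nonempty compact subsets of X with C_j ⊆ C_{j+1} for all j, such that x* ∈ C_j for all j ≥ k for some k, and let x_j ∈ C_j satisfy max_{y ∈ C_j} F(x_j)ᵀ(x_j − y) < 1/2^j for each j. Then M‖x_j − x*‖² < 1/2^j for all j > k, and hence the sequence {x_j} converges to x*. -/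
open scoped RealInnerProductSpace

/-!
At a solution `x*` one has `⟪F x*, x - x*⟫ ≥ 0`, so strong monotonicity between `x` and `x*` gives
`M‖x - x*‖² ≤ ⟪F x, x - x*⟫`. As soon as `x* ∈ S`, the right-hand side is one of the values whose
supremum is the gap of `x` relative to `S`; hence a small gap forces `x` to be close to `x*`.
-/

open Bornology Filter Topology

section StrongMonotonicity

variable {E : Type*} [NormedAddCommGroup E] [InnerProductSpace ℝ E]

/-- `F` is strongly monotone on `X` with constant `M`. No sign is imposed on `M`. -/
def StronglyMonotoneOn (F : E → E) (M : ℝ) (X : Set E) : Prop :=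
  ∀ x ∈ X, ∀ y ∈ X, M * ‖y - x‖ ^ 2 ≤ ⟪F y - F x, y - x⟫

/-- `a` is a solution of the variational inequality `VI(F, X)`. -/
structure IsVISolution (F : E → E) (X : Set E) (a : E) : Prop where
  mem : a ∈ X
  inner_nonneg : ∀ x ∈ X, 0 ≤ ⟪F a, x - a⟫

/-- The gap function of `F` relative to `S`, with the maximum written as a real supremum; it takes
the junk value `0` where the set of values is empty or unbounded above. -/
noncomputable def gap (F : E → E) (S : Set E) (x : E) : ℝ :=
  sSup ((fun y => ⟪F x, x - y⟫) '' S)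

variable {F : E → E} {X S : Set E} {M : ℝ} {a x y : E}

theorem bddAbove_image_inner_sub (hS : IsBounded S) (v x : E) :
    BddAbove ((fun y => ⟪v, x - y⟫) '' S) :=
  have hlip := (innerSL ℝ v).lipschitz.comp ((LipschitzWith.const x).sub LipschitzWith.id)
  (hlip.isBounded_image hS).bddAbove

theorem inner_sub_le_gap (hS : IsBounded S) (hy : y ∈ S) : ⟪F x, x - y⟫ ≤ gap F S x :=
  le_csSup (bddAbove_image_inner_sub hS (F x) x) (Set.mem_image_of_mem _ hy)

theorem StronglyMonotoneOn.mul_norm_sub_sq_le_inner (hF : StronglyMonotoneOn F M X)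
    (ha : IsVISolution F X a) (hx : x ∈ X) : M * ‖x - a‖ ^ 2 ≤ ⟪F x, x - a⟫ :=
  calc M * ‖x - a‖ ^ 2 ≤ ⟪F x - F a, x - a⟫ := hF a ha.mem x hx
    _ = ⟪F x, x - a⟫ - ⟪F a, x - a⟫ := inner_sub_left _ _ _
    _ ≤ ⟪F x, x - a⟫ := sub_le_self _ (ha.inner_nonneg x hx)

theorem StronglyMonotoneOn.mul_norm_sub_sq_le_gap (hF : StronglyMonotoneOn F M X)
    (ha : IsVISolution F X a) (hx : x ∈ X) (hS : IsBounded S) (haS : a ∈ S) :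
    M * ‖x - a‖ ^ 2 ≤ gap F S x :=
  (hF.mul_norm_sub_sq_le_inner ha hx).trans (inner_sub_le_gap hS haS)

end StrongMonotonicity

theorem tendsto_of_eventually_mul_norm_sub_sq_le {ι E : Type*} [SeminormedAddCommGroup E]
    {l : Filter ι} {x : ι → E} {a : E} {ε : ι → ℝ} {M : ℝ} (hM : 0 < M)
    (hε : Tendsto ε l (𝓝 0)) (hle : ∀ᶠ i in l, M * ‖x i - a‖ ^ 2 ≤ ε i) :
    Tendsto x l (𝓝 a) := by
  have hsqrt : Tendsto (fun i => √(ε i / M)) l (𝓝 0) := by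
    simpa using (hε.div_const M).sqrt
  rw [tendsto_iff_norm_sub_tendsto_zero]
  refine squeeze_zero' (.of_forall fun _ => norm_nonneg _) (hle.mono fun i hi => ?_) hsqrt
  exact Real.le_sqrt_of_sq_le ((le_div_iff₀' hM).2 hi)

theorem iterates_converge_to_solution_general {E : Type*} [NormedAddCommGroup E]
    [InnerProductSpace ℝ E] {F : E → E} {X : Set E} {M : ℝ} (hM : 0 < M)
    (hF : StronglyMonotoneOn F M X) {xstar : E} (hsol : IsVISolution F X xstar)
    {C : ℕ → Set E} (hC : ∀ j, IsBounded (C j)) {k : ℕ} (hk : ∀ j ≥ k, xstar ∈ C j)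
    {x : ℕ → E} (hx : ∀ j, x j ∈ X) {ε : ℕ → ℝ} (hε : Tendsto ε atTop (𝓝 0))
    (hgap : ∀ j, gap F (C j) (x j) < ε j) :
    (∀ j ≥ k, M * ‖x j - xstar‖ ^ 2 < ε j) ∧ Tendsto x atTop (𝓝 xstar) := by
  have hlt : ∀ j ≥ k, M * ‖x j - xstar‖ ^ 2 < ε j := fun j hj =>
    (hF.mul_norm_sub_sq_le_gap hsol (hx j) (hC j) (hk j hj)).trans_lt (hgap j)
  refine ⟨hlt, tendsto_of_eventually_mul_norm_sub_sq_le hM hε ?_⟩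
  filter_upwards [eventually_ge_atTop k] with j hj using (hlt j hj).le

/-- For a strongly monotone `F` on a closed convex set `X`, iterates `x_j ∈ C_j`
with gap over `C_j` less than `1/2^j` satisfy `M‖x_j − x*‖² < 1/2^j` once `x* ∈ C_j`,
and hence converge to the solution `x*`. -/
theorem iterates_converge_to_solution {n : ℕ}
    (X : Set (EuclideanSpace ℝ (Fin n))) (hne : X.Nonempty)
    (hclosed : IsClosed X) (hconv : Convex ℝ X)
    (F : EuclideanSpace ℝ (Fin n) → EuclideanSpace ℝ (Fin n))
    (hF : ContinuousOn F X)
    (M : ℝ) (hM : M > 0)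
    (hstrong : ∀ x ∈ X, ∀ y ∈ X, ⟪F y - F x, y - x⟫ ≥ M * ‖y - x‖ ^ 2)
    (xstar : EuclideanSpace ℝ (Fin n)) (hxstar : xstar ∈ X)
    (hsol : ∀ x ∈ X, ⟪F xstar, x - xstar⟫ ≥ 0)
    (C : ℕ → Set (EuclideanSpace ℝ (Fin n)))
    (hCne : ∀ j, (C j).Nonempty) (hCcomp : ∀ j, IsCompact (C j))
    (hCX : ∀ j, C j ⊆ X) (hmono : ∀ j, C j ⊆ C (j + 1))
    (k : ℕ) (hk : ∀ j ≥ k, xstar ∈ C j)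
    (x : ℕ → EuclideanSpace ℝ (Fin n)) (hx : ∀ j, x j ∈ C j)
    (hgap : ∀ j, sSup ((fun y => ⟪F (x j), x j - y⟫) '' C j) < 1 / 2 ^ j) :
    (∀ j > k, M * ‖x j - xstar‖ ^ 2 < 1 / 2 ^ j) ∧
      Filter.Tendsto x Filter.atTop (nhds xstar) := by
  have hε : Tendsto (fun j : ℕ => (1 : ℝ) / 2 ^ j) atTop (𝓝 0) := by
    simpa only [one_div_pow] using
      tendsto_pow_atTop_nhds_zero_of_lt_one (one_half_pos (α := ℝ)).le one_half_lt_one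
  exact (iterates_converge_to_solution_general hM hstrong ⟨hxstar, hsol⟩
    (fun j => (hCcomp j).isBounded) hk (fun j => hCX j (hx j)) hε hgap).imp_left
    fun hlt j hj => hlt j hj.le
end
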